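/- Let K be a perfect field of characteristic p > 0 and A_n the n-th Weyl algebra over K with centre Z_n = K[X_1, …, X_{2n}], X_i = x_i^p. For an affine automorphism σ_{A,a} of A_n, given by x ↦ Ax + a with A = (a_{ij}) ∈ Sp_{2n}(K) and a = (a_i) ∈ K^{2n}, the restriction res_n(σ_{A,a}) to Z_n is the affine automorphism X ↦ A'X + a' where: if p > 2, A' = (a_{ij}^p) and a' = (a_i^p); and if p = 2, A' = (a_{ij}²) and a'_i = a_i² + Σ_{j=1}^n a_{ij} a_{i,n+j}. Consequently, the image of Aff(A_n) under res_n is the subgroup {affine automorphisms of Z_n with linear part in Sp_{2n}(K) and arbitrary translation in K^{2n}} ≅ Sp_{2n}(K)^{op} ⋉ K^{2n} of Aff(Z_n). -/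

import Mathlib

/-!
STATEMENT 18: Let `K` be a perfect field of characteristic `p > 0` and `A_n` the `n`-th
Weyl algebra, with centre `Z_n = K[X_1, …, X_{2n}]`, `X_k = x_k^p`.  For an affine
automorphism `σ_{A,a} : x ↦ Ax + a` with `A ∈ Sp_{2n}(K)`, `a ∈ K^{2n}`, the restriction
to the centre is `X ↦ A'X + a'` where, if `p > 2`, `A' = (a_{kl}^p)`, `a' = (a_k^p)`, and
if `p = 2`, `A' = (a_{kl}²)`, `a'_k = a_k² + Σ_{j=1}^n a_{k,j} a_{k,n+j}`.
Consequently the image of `Aff(A_n)` under `res_n` is exactly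
`Sp_{2n}(K)^{op} ⋉ K^{2n}`: every affine automorphism of `Z_n` with linear part in
`Sp_{2n}(K)` (acting on the generators `x_k^p`) arises as the restriction of an affine
automorphism of `A_n`.

Generators are indexed by `Fin n ⊕ Fin n` (`Sum.inl i = x_i`, `Sum.inr i = ∂_i`), matching
Mathlib's symplectic group `Matrix.symplecticGroup (Fin n) K`.
-/

noncomputable section

/-- The defining relations of the `n`-th Weyl algebra: the `x_i` (indexed by `Sum.inl`)
commute, the `∂_i` (indexed by `Sum.inr`) commute, and `∂_i x_j = x_j ∂_i + δ_{ij}`. -/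
inductive WeylRelN (K : Type*) [CommRing K] (n : ℕ) :
    FreeAlgebra K (Fin n ⊕ Fin n) → FreeAlgebra K (Fin n ⊕ Fin n) → Prop
  | xx (i j : Fin n) : WeylRelN K n
      (FreeAlgebra.ι K (Sum.inl i) * FreeAlgebra.ι K (Sum.inl j))
      (FreeAlgebra.ι K (Sum.inl j) * FreeAlgebra.ι K (Sum.inl i))
  | dd (i j : Fin n) : WeylRelN K n
      (FreeAlgebra.ι K (Sum.inr i) * FreeAlgebra.ι K (Sum.inr j))
      (FreeAlgebra.ι K (Sum.inr j) * FreeAlgebra.ι K (Sum.inr i))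
  | dx_ne (i j : Fin n) (h : i ≠ j) : WeylRelN K n
      (FreeAlgebra.ι K (Sum.inr i) * FreeAlgebra.ι K (Sum.inl j))
      (FreeAlgebra.ι K (Sum.inl j) * FreeAlgebra.ι K (Sum.inr i))
  | dx (i : Fin n) : WeylRelN K n
      (FreeAlgebra.ι K (Sum.inr i) * FreeAlgebra.ι K (Sum.inl i))
      (FreeAlgebra.ι K (Sum.inl i) * FreeAlgebra.ι K (Sum.inr i) + 1)

/-- The `n`-th Weyl algebra `A_n(K)`. -/
abbrev WeylN (K : Type*) [CommRing K] (n : ℕ) := RingQuot (WeylRelN K n)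

/-- The generators of the `n`-th Weyl algebra: `wgen K n (Sum.inl i) = x_i` and
`wgen K n (Sum.inr i) = ∂_i`. -/
def wgen (K : Type*) [CommRing K] (n : ℕ) (k : Fin n ⊕ Fin n) : WeylN K n :=
  RingQuot.mkAlgHom K (WeylRelN K n) (FreeAlgebra.ι K k)

/-!
An affine form in the Weyl generators is a sum of the `n` mutually commuting pairs
`b_j ∂_j + a_j x_j` and a constant `c`, so in characteristic `p` its `p`-th power is the sum of the
`p`-th powers of the pairs and `c ^ p`. The two terms `u`, `v` of a pair have the central commutator
`⁅u, v⁆ = a_j b_j`. For `p = 2` visibly `(u + v) ^ 2 = u ^ 2 + v ^ 2 + ⁅u, v⁆`. For odd `p` put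
`f = u t + v` with `t` a central variable: the derivative of `f ^ p` is
`p f ^ (p - 1) u + (p choose 2) f ^ (p - 2) ⁅u, v⁆ = 0`, so only the extreme coefficients of `f ^ p`
survive and `(u + v) ^ p = u ^ p + v ^ p`.

For the image of the restriction, Frobenius is a ring automorphism of `K`, so the entrywise `p`-th
root of a symplectic matrix is symplectic; the translation part is then solved for, by taking the
`p`-th root of what remains of `b_k` after subtracting the commutator terms.
-/

section RingCharP

open Polynomial

variable {R : Type*}

theorem sum_pow_char_of_pairwise_commute [Semiring R] (p : ℕ) [Fact p.Prime] [CharP R p]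
    {ι : Type*} (s : Finset ι) (f : ι → R)
    (hf : (s : Set ι).Pairwise fun i j => Commute (f i) (f j)) :
    (∑ i ∈ s, f i) ^ p = ∑ i ∈ s, f i ^ p := by
  induction s using Finset.cons_induction with
  | empty => simp [(Fact.out : p.Prime).ne_zero]
  | cons i s hi ih =>
    have hcomm : Commute (f i) (∑ j ∈ s, f j) := Commute.sum_right _ _ _ fun j hj =>
      hf (by simp) (by simp [hj]) (ne_of_mem_of_not_mem hj hi).symm
    rw [Finset.sum_cons, Finset.sum_cons, add_pow_char_of_commute p hcomm,
      ih (hf.mono (by simp))]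

theorem derivative_pow_of_commute_lie [Ring R] {f : R[X]} (hf : Commute f ⁅derivative f, f⁆)
    (m : ℕ) :
    derivative (f ^ (m + 2)) = ((m + 2 : ℕ) : R[X]) * (f ^ (m + 1) * derivative f)
      + ((m + 2).choose 2 : R[X]) * (f ^ m * ⁅derivative f, f⁆) := by
  have hswap : derivative f * f = f * derivative f + ⁅derivative f, f⁆ := by
    rw [Ring.lie_def]; abel
  induction m with
  | zero =>
    rw [zero_add, pow_two, derivative_mul, hswap, Nat.choose_self]
    push_cast
    noncomm_ring
  | succ m ih =>
    have hchoose : (m + 3).choose 2 = (m + 2) + (m + 2).choose 2 := by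
      rw [Nat.choose_succ_succ' (m + 2) 1, Nat.choose_one_right]
    rw [pow_succ, derivative_mul, ih, add_mul, mul_assoc, mul_assoc, mul_assoc _ _ f,
      mul_assoc _ _ f, hswap, ← hf.eq, ← mul_assoc (f ^ m), ← pow_succ, mul_add,
      ← mul_assoc _ f, ← pow_succ, show m + 1 + 2 = m + 3 from rfl, hchoose]
    push_cast
    noncomm_ring

theorem derivative_pow_char_eq_zero_of_commute_lie [Ring R] (p : ℕ) [Fact p.Prime] [CharP R p]
    (hp : p ≠ 2) {f : R[X]} (hf : Commute f ⁅derivative f, f⁆) : derivative (f ^ p) = 0 := by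
  have hprime : p.Prime := Fact.out
  have hchoose : (p.choose 2 : R[X]) = 0 := (CharP.cast_eq_zero_iff R[X] p _).2 <|
    hprime.dvd_choose_self two_ne_zero (hprime.two_le.lt_of_ne' hp)
  obtain ⟨m, rfl⟩ := Nat.exists_eq_add_of_le' hprime.two_le
  rw [derivative_pow_of_commute_lie hf, hchoose, CharP.cast_eq_zero, zero_mul, zero_mul, add_zero]

theorem coeff_eq_zero_of_derivative_eq_zero [Ring R] {p : ℕ} [Fact p.Prime] [CharP R p]
    {f : R[X]} (hf : derivative f = 0) {i : ℕ} (hi : ¬ p ∣ i) : f.coeff i = 0 := by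
  obtain ⟨j, rfl⟩ := Nat.exists_eq_succ_of_ne_zero (fun h : i = 0 => hi (h ▸ dvd_zero p))
  have hunit : IsUnit ((j + 1 : ℕ) : R) := (CharP.isUnit_natCast_iff Fact.out).2 hi
  rw [← hunit.mul_left_eq_zero, Nat.cast_succ, ← coeff_derivative, hf, coeff_zero]

theorem eq_C_mul_X_pow_add_C_of_derivative_eq_zero [Ring R] {p : ℕ} [Fact p.Prime] [CharP R p]
    {f : R[X]} (hdeg : f.natDegree ≤ p) (hf : derivative f = 0) :
    f = C (f.coeff p) * X ^ p + C (f.coeff 0) := by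
  have hp : p ≠ 0 := (Fact.out : p.Prime).ne_zero
  ext i
  rw [coeff_add, coeff_C_mul_X_pow, coeff_C]
  rcases eq_or_ne i 0 with rfl | hi0
  · simp [hp.symm]
  rcases eq_or_ne i p with rfl | hip
  · simp [hp]
  rw [if_neg hip, if_neg hi0, add_zero]
  rcases lt_or_gt_of_ne hip with hlt | hgt
  · exact coeff_eq_zero_of_derivative_eq_zero hf
      (Nat.not_dvd_of_pos_of_lt (Nat.pos_of_ne_zero hi0) hlt)
  · exact coeff_eq_zero_of_natDegree_lt (hdeg.trans_lt hgt)

theorem add_pow_char_of_commute_lie_of_ne_two [Ring R] (p : ℕ) [Fact p.Prime] [CharP R p]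
    (hp : p ≠ 2) {u v : R} (hu : Commute u ⁅u, v⁆) (hv : Commute v ⁅u, v⁆) :
    (u + v) ^ p = u ^ p + v ^ p := by
  -- Jacobson's trick: expand `(u t + v) ^ p` over a central variable `t` and differentiate.
  set f : R[X] := C u * X + C v with hf
  have hlie : ⁅derivative f, f⁆ = C ⁅u, v⁆ := by
    simp only [hf, Ring.lie_def, derivative_add, derivative_mul, derivative_C, derivative_X,
      zero_mul, zero_add, add_zero, mul_one, mul_add, add_mul, C_sub, C_mul]
    rw [mul_assoc (C u), X_mul_C, add_sub_add_left_eq_sub]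
  have hcomm : Commute f ⁅derivative f, f⁆ := by
    rw [hlie]
    exact ((hu.map C).mul_left (commute_X _)).add_left (hv.map C)
  have hdegree : f.natDegree ≤ 1 := natDegree_linear_le
  have htop : (f ^ p).coeff p = u ^ p := by
    simpa [hf] using coeff_pow_of_natDegree_le (m := p) hdegree
  have hzero : (f ^ p).coeff 0 = v ^ p := by
    rw [← constantCoeff_apply, map_pow]; simp [hf]
  have hexpand : f ^ p = C (u ^ p) * X ^ p + C (v ^ p) := by
    rw [← htop, ← hzero]
    exact eq_C_mul_X_pow_add_C_of_derivative_eq_zero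
      (by simpa using natDegree_pow_le_of_le p hdegree)
      (derivative_pow_char_eq_zero_of_commute_lie p hp hcomm)
  let evalOne : R[X] →+* R := eval₂RingHom' (RingHom.id R) 1 Commute.one_right
  have heval := congrArg evalOne hexpand
  simp only [hf, map_pow, map_add, map_mul] at heval
  simpa [evalOne] using heval

theorem add_sq_of_charTwo [Ring R] [CharP R 2] (u v : R) :
    (u + v) ^ 2 = u ^ 2 + v ^ 2 + ⁅u, v⁆ := by
  rw [Ring.lie_def, CharTwo.sub_eq_add]
  noncomm_ring

theorem add_pow_char_of_commute_lie [Ring R] (p : ℕ) [Fact p.Prime] [CharP R p] {u v : R}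
    (hu : Commute u ⁅u, v⁆) (hv : Commute v ⁅u, v⁆) :
    (u + v) ^ p = u ^ p + v ^ p + if p = 2 then ⁅u, v⁆ else 0 := by
  split_ifs with hp
  · subst hp
    exact add_sq_of_charTwo u v
  · rw [add_zero, add_pow_char_of_commute_lie_of_ne_two p hp hu hv]

end RingCharP

section AffineForm

open Matrix

attribute [local instance] LieRing.ofAssociativeRing

variable {K R S ι : Type*} [CommRing K] [Ring R] [Algebra K R] [Ring S] [Algebra K S] [Fintype ι]

/-- The affine form `∑ l, v l * y l + c` in elements `y l` of a `K`-algebra. With `y` the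
generators of the Weyl algebra, or their `p`-th powers, the rows of an affine automorphism of
`A_n`, or of its centre, have this shape. -/
def affineForm (y : ι → R) (v : ι → K) (c : K) : R :=
  (∑ l, algebraMap K R (v l) * y l) + algebraMap K R c

theorem map_affineForm (f : R →ₐ[K] S) (y : ι → R) (v : ι → K) (c : K) :
    f (affineForm y v c) = affineForm (fun l => f (y l)) v c := by
  simp only [affineForm, map_add, map_sum, map_mul, AlgHom.commutes]

theorem affineForm_affineForm (y : ι → R) (A : Matrix ι ι K) (a v : ι → K) (c : K) :
    affineForm (fun k => affineForm y (A k) (a k)) v c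
      = affineForm y (v ᵥ* A) (v ⬝ᵥ a + c) := by
  simp only [affineForm, mul_add, Finset.sum_add_distrib, Finset.mul_sum, ← mul_assoc, ← map_mul]
  rw [Finset.sum_comm]
  simp only [← Finset.sum_mul, ← map_sum, add_assoc, ← map_add]
  rfl

theorem affineForm_one_zero [DecidableEq ι] (y : ι → R) (k : ι) :
    affineForm y ((1 : Matrix ι ι K) k) 0 = y k := by
  simp [affineForm, Matrix.one_apply, apply_ite (algebraMap K R)]

theorem smul_lie_smul (a b : K) (x y : R) : ⁅a • x, b • y⁆ = (a * b) • ⁅x, y⁆ := by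
  rw [Ring.lie_def, Ring.lie_def, smul_mul_smul_comm, smul_mul_smul_comm, mul_comm b, smul_sub]

theorem lie_affineForm {y : ι → R} {ω : Matrix ι ι K}
    (hy : ∀ i j, ⁅y i, y j⁆ = algebraMap K R (ω i j)) (v w : ι → K) (c d : K) :
    ⁅affineForm y v c, affineForm y w d⁆ = algebraMap K R (v ⬝ᵥ ω *ᵥ w) := by
  have hconst_left : ∀ (r : K) (x : R), ⁅algebraMap K R r, x⁆ = 0 := fun r x =>
    (Algebra.commute_algebraMap_left r x).lie_eq
  have hconst_right : ∀ (r : K) (x : R), ⁅x, algebraMap K R r⁆ = 0 := fun r x =>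
    (Algebra.commute_algebraMap_right r x).lie_eq
  simp only [affineForm, ← Algebra.smul_def, add_lie, lie_add, hconst_left, hconst_right, add_zero,
    sum_lie, lie_sum, smul_lie_smul, hy]
  rw [Finset.sum_comm]
  simp only [Algebra.smul_def, ← map_mul, ← map_sum, dotProduct, mulVec, Finset.mul_sum,
    mul_assoc, mul_comm (w _)]

end AffineForm

section CanonicalFamily

open Matrix

attribute [local instance] LieRing.ofAssociativeRing

variable {K R ι : Type*} [CommRing K] [Ring R] [Algebra K R]

/-- The constant term of the `p`-th power of an affine form with coefficients `v` and constant
term `c` in elements satisfying the canonical commutation relations: the paper's `a'_k` is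
`frobeniusConst p (A k) (a k)`. -/
def frobeniusConst [Fintype ι] (p : ℕ) (v : ι ⊕ ι → K) (c : K) : K :=
  c ^ p + if p = 2 then ∑ j, v (Sum.inl j) * v (Sum.inr j) else 0

theorem affineForm_eq_sum_pair [Fintype ι] (y : ι ⊕ ι → R) (v : ι ⊕ ι → K) (c : K) :
    affineForm y v c
      = (∑ j, (v (Sum.inr j) • y (Sum.inr j) + v (Sum.inl j) • y (Sum.inl j)))
        + algebraMap K R c := by
  simp only [affineForm, Fintype.sum_sum_type, Finset.sum_add_distrib, ← Algebra.smul_def]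
  rw [add_comm (∑ j, _)]

variable (K) in
/-- The canonical commutation relations defining the Weyl algebra, for elements of an arbitrary
`K`-algebra: `y (Sum.inl i)` plays the role of `x_i` and `y (Sum.inr i)` that of `∂_i`. They are
encoded by Mathlib's matrix `J` of the symplectic form, with `⁅x_i, ∂_i⁆ = -1`. -/
def IsCanonicalFamily [DecidableEq ι] (y : ι ⊕ ι → R) : Prop :=
  ∀ k l, ⁅y k, y l⁆ = algebraMap K R (J ι K k l)

variable [DecidableEq ι]

theorem IsCanonicalFamily.commute_pair {y : ι ⊕ ι → R} (hy : IsCanonicalFamily K y)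
    (v : ι ⊕ ι → K) {i j : ι} (hij : i ≠ j) :
    Commute (v (Sum.inr i) • y (Sum.inr i) + v (Sum.inl i) • y (Sum.inl i))
      (v (Sum.inr j) • y (Sum.inr j) + v (Sum.inl j) • y (Sum.inl j)) := by
  rw [commute_iff_lie_eq]
  simp only [add_lie, lie_add, smul_lie_smul, hy _ _]
  simp [J, hij]

theorem IsCanonicalFamily.pair_pow {y : ι ⊕ ι → R} (hy : IsCanonicalFamily K y)
    (p : ℕ) [Fact p.Prime] [CharP R p] (v : ι ⊕ ι → K) (j : ι) :
    (v (Sum.inr j) • y (Sum.inr j) + v (Sum.inl j) • y (Sum.inl j)) ^ p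
      = v (Sum.inr j) ^ p • y (Sum.inr j) ^ p + v (Sum.inl j) ^ p • y (Sum.inl j) ^ p
        + algebraMap K R (if p = 2 then v (Sum.inl j) * v (Sum.inr j) else 0) := by
  have hlie : ⁅v (Sum.inr j) • y (Sum.inr j), v (Sum.inl j) • y (Sum.inl j)⁆
      = algebraMap K R (v (Sum.inl j) * v (Sum.inr j)) := by
    rw [smul_lie_smul, hy]
    simp [J, Algebra.smul_def, mul_comm (v (Sum.inr j))]
  have hcentral : ∀ x : R, Commute x (algebraMap K R (v (Sum.inl j) * v (Sum.inr j))) :=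
    Algebra.commute_algebraMap_right _
  rw [add_pow_char_of_commute_lie p (hlie ▸ hcentral _) (hlie ▸ hcentral _), hlie, smul_pow,
    smul_pow, apply_ite (algebraMap K R), map_zero]

variable [Fintype ι]

theorem IsCanonicalFamily.affineForm_of_mem_symplecticGroup {y : ι ⊕ ι → R}
    (hy : IsCanonicalFamily K y) {A : Matrix (ι ⊕ ι) (ι ⊕ ι) K} (hA : A ∈ symplecticGroup ι K)
    (a : ι ⊕ ι → K) : IsCanonicalFamily K fun k => affineForm y (A k) (a k) := by
  intro k l
  rw [lie_affineForm hy]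
  nth_rw 2 [← SymplecticGroup.mem_iff.1 hA]
  rw [Matrix.mul_assoc]
  rfl

theorem IsCanonicalFamily.affineForm_pow {y : ι ⊕ ι → R} (hy : IsCanonicalFamily K y)
    (p : ℕ) [Fact p.Prime] [CharP K p] (v : ι ⊕ ι → K) (c : K) :
    affineForm y v c ^ p
      = affineForm (fun l => y l ^ p) (fun l => v l ^ p) (frobeniusConst p v c) := by
  rcases subsingleton_or_nontrivial R with _ | _
  · exact Subsingleton.elim _ _
  have : CharP R p := (CharP.charP_iff_prime_eq_zero Fact.out).2 <| by
    rw [← map_natCast (algebraMap K R), CharP.cast_eq_zero, map_zero]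
  have hconst : (∑ j, if p = 2 then v (Sum.inl j) * v (Sum.inr j) else 0)
      = if p = 2 then ∑ j, v (Sum.inl j) * v (Sum.inr j) else 0 := by
    split_ifs <;> simp
  rw [affineForm_eq_sum_pair, affineForm_eq_sum_pair, frobeniusConst,
    add_pow_char_of_commute p (Algebra.commute_algebraMap_right c _),
    sum_pow_char_of_pairwise_commute p _ _ fun i _ j _ hij => hy.commute_pair v hij]
  simp only [hy.pair_pow p, Finset.sum_add_distrib, ← map_sum, hconst, ← map_pow, map_add]
  abel

end CanonicalFamily

namespace WeylN

open Matrix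

variable {K R : Type*} [CommRing K] [Ring R] [Algebra K R] {n : ℕ}

theorem isCanonicalFamily_wgen : IsCanonicalFamily K (wgen K n) := by
  have hrel {x y} (h : WeylRelN K n x y) :
      RingQuot.mkAlgHom K (WeylRelN K n) x = RingQuot.mkAlgHom K (WeylRelN K n) y :=
    RingQuot.mkAlgHom_rel K h
  have hxx (i j : Fin n) : Commute (wgen K n (Sum.inl i)) (wgen K n (Sum.inl j)) := by
    simpa only [wgen, Commute, SemiconjBy, map_mul] using hrel (.xx i j)
  have hdd (i j : Fin n) : Commute (wgen K n (Sum.inr i)) (wgen K n (Sum.inr j)) := by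
    simpa only [wgen, Commute, SemiconjBy, map_mul] using hrel (.dd i j)
  have hdx (i j : Fin n) :
      ⁅wgen K n (Sum.inr i), wgen K n (Sum.inl j)⁆ = if i = j then 1 else 0 := by
    rw [Ring.lie_def, sub_eq_iff_eq_add']
    split_ifs with hij
    · subst hij
      simpa only [wgen, map_mul, map_add, map_one] using hrel (.dx i)
    · simpa only [wgen, map_mul, add_zero] using hrel (.dx_ne i j hij)
  rintro (i | i) (j | j)
  · simpa [J] using (hxx i j).lie_eq
  · rw [Ring.lie_def, ← neg_sub, ← Ring.lie_def, hdx]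
    simp [J, one_apply, eq_comm, apply_ite (algebraMap K (WeylN K n))]
  · rw [hdx]
    simp [J, one_apply, apply_ite (algebraMap K (WeylN K n))]
  · simpa [J] using (hdd i j).lie_eq

/-- The universal property of the Weyl algebra: elements satisfying the canonical commutation
relations are the images of the generators under an algebra homomorphism. -/
def lift (y : Fin n ⊕ Fin n → R) (hy : IsCanonicalFamily K y) : WeylN K n →ₐ[K] R :=
  RingQuot.liftAlgHom K ⟨FreeAlgebra.lift K y, by
    rintro _ _ (⟨i, j⟩ | ⟨i, j⟩ | ⟨i, j, hij⟩ | i) <;>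
      simp only [map_mul, map_add, map_one, FreeAlgebra.lift_ι_apply]
    · simpa [J, Ring.lie_def, sub_eq_zero] using hy (Sum.inl i) (Sum.inl j)
    · simpa [J, Ring.lie_def, sub_eq_zero] using hy (Sum.inr i) (Sum.inr j)
    · simpa [J, Ring.lie_def, sub_eq_zero, hij] using hy (Sum.inr i) (Sum.inl j)
    · simpa [J, Ring.lie_def, sub_eq_iff_eq_add'] using hy (Sum.inr i) (Sum.inl i)⟩

theorem lift_wgen (y : Fin n ⊕ Fin n → R) (hy : IsCanonicalFamily K y) (k : Fin n ⊕ Fin n) :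
    lift y hy (wgen K n k) = y k := by
  rw [lift, wgen, RingQuot.liftAlgHom_mkAlgHom_apply, FreeAlgebra.lift_ι_apply]

theorem algHom_ext {f g : WeylN K n →ₐ[K] R} (h : ∀ k, f (wgen K n k) = g (wgen K n k)) :
    f = g :=
  RingQuot.ringQuot_ext' _ _ _ (FreeAlgebra.hom_ext (funext h))

/-- The endomorphism `x ↦ A x + a` of the Weyl algebra. -/
def affineHom (A : symplecticGroup (Fin n) K) (a : Fin n ⊕ Fin n → K) :
    WeylN K n →ₐ[K] WeylN K n :=
  lift _ (isCanonicalFamily_wgen.affineForm_of_mem_symplecticGroup A.2 a)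

theorem affineHom_wgen (A : symplecticGroup (Fin n) K) (a : Fin n ⊕ Fin n → K)
    (k : Fin n ⊕ Fin n) : affineHom A a (wgen K n k) = affineForm (wgen K n) (A.1 k) (a k) :=
  lift_wgen _ _ k

theorem affineHom_comp (A B : symplecticGroup (Fin n) K) (a b : Fin n ⊕ Fin n → K) :
    (affineHom A a).comp (affineHom B b) = affineHom (B * A) (B.1 *ᵥ a + b) := by
  refine algHom_ext fun k => ?_
  rw [AlgHom.comp_apply, affineHom_wgen, affineHom_wgen, map_affineForm]
  simp only [affineHom_wgen, affineForm_affineForm]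
  rfl

theorem affineHom_one_zero :
    affineHom (1 : symplecticGroup (Fin n) K) 0 = AlgHom.id K (WeylN K n) :=
  algHom_ext fun k => (affineHom_wgen 1 0 k).trans (affineForm_one_zero (wgen K n) k)

/-- The automorphism `σ_{A,a} : x ↦ A x + a` of the Weyl algebra. -/
def affineEquiv (A : symplecticGroup (Fin n) K) (a : Fin n ⊕ Fin n → K) :
    WeylN K n ≃ₐ[K] WeylN K n :=
  AlgEquiv.ofAlgHom (affineHom A a) (affineHom A⁻¹ (-(A⁻¹.1 *ᵥ a)))
    (by rw [affineHom_comp, inv_mul_cancel, add_neg_cancel, affineHom_one_zero])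
    (by
      have hA : A.1 * A⁻¹.1 = 1 := congrArg Subtype.val (mul_inv_cancel A)
      rw [affineHom_comp, mul_inv_cancel, mulVec_neg, mulVec_mulVec, hA, one_mulVec,
        neg_add_cancel, affineHom_one_zero])

theorem affineEquiv_wgen (A : symplecticGroup (Fin n) K) (a : Fin n ⊕ Fin n → K)
    (k : Fin n ⊕ Fin n) : affineEquiv A a (wgen K n k) = affineForm (wgen K n) (A.1 k) (a k) :=
  affineHom_wgen A a k

theorem map_wgen_pow (p : ℕ) [Fact p.Prime] [CharP K p] (σ : WeylN K n →ₐ[K] WeylN K n)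
    (k : Fin n ⊕ Fin n) {v : Fin n ⊕ Fin n → K} {c : K}
    (hσ : σ (wgen K n k) = affineForm (wgen K n) v c) :
    σ (wgen K n k ^ p)
      = affineForm (fun l => wgen K n l ^ p) (fun l => v l ^ p) (frobeniusConst p v c) := by
  rw [map_pow, hσ, isCanonicalFamily_wgen.affineForm_pow p]

theorem exists_affineEquiv_map_wgen_pow (p : ℕ) [Fact p.Prime] [CharP K p] [PerfectRing K p]
    (B : symplecticGroup (Fin n) K) (b : Fin n ⊕ Fin n → K) :
    ∃ (A : symplecticGroup (Fin n) K) (a : Fin n ⊕ Fin n → K), ∀ k,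
      affineEquiv A a (wgen K n k ^ p) = affineForm (fun l => wgen K n l ^ p) (B.1 k) (b k) := by
  let root := (frobeniusEquiv K p).symm
  have hroot (c : K) : root c ^ p = c := frobeniusEquiv_symm_pow_p K p c
  let A : symplecticGroup (Fin n) K := ⟨B.1.map root, SymplecticGroup.map_mem B.2 root⟩
  let correction (k : Fin n ⊕ Fin n) : K :=
    if p = 2 then ∑ j, A.1 k (Sum.inl j) * A.1 k (Sum.inr j) else 0
  refine ⟨A, fun k => root (b k - correction k), fun k => ?_⟩
  refine (map_wgen_pow p (affineEquiv A _).toAlgHom k (affineEquiv_wgen A _ k)).trans ?_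
  have hlinear : (fun l => A.1 k l ^ p) = B.1 k := funext fun l => hroot _
  have hconst : frobeniusConst p (A.1 k) (root (b k - correction k)) = b k := by
    rw [frobeniusConst, hroot, sub_add_cancel]
  rw [hlinear, hconst]

end WeylN

theorem statement18_general (p n : ℕ) [Fact p.Prime] (K : Type*) [CommRing K] [CharP K p]
    [PerfectRing K p] :
    (∀ (A : Matrix (Fin n ⊕ Fin n) (Fin n ⊕ Fin n) K) (a : Fin n ⊕ Fin n → K)
      (σ : WeylN K n →ₐ[K] WeylN K n),
      (∀ k, σ (wgen K n k) = affineForm (wgen K n) (A k) (a k)) →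
      (2 < p → ∀ k, σ (wgen K n k ^ p)
          = affineForm (fun l => wgen K n l ^ p) (fun l => A k l ^ p) (a k ^ p)) ∧
      (p = 2 → ∀ k, σ (wgen K n k ^ p)
          = affineForm (fun l => wgen K n l ^ p) (fun l => A k l ^ 2)
              (a k ^ 2 + ∑ j : Fin n, A k (Sum.inl j) * A k (Sum.inr j)))) ∧
    (∀ B ∈ Matrix.symplecticGroup (Fin n) K, ∀ b : Fin n ⊕ Fin n → K,
      ∃ σ : WeylN K n ≃ₐ[K] WeylN K n,
        (∃ A ∈ Matrix.symplecticGroup (Fin n) K, ∃ a : Fin n ⊕ Fin n → K,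
          ∀ k, σ (wgen K n k) = affineForm (wgen K n) (A k) (a k)) ∧
        ∀ k, σ (wgen K n k ^ p) = affineForm (fun l => wgen K n l ^ p) (B k) (b k)) := by
  refine ⟨fun A a σ hσ => ⟨fun hp k => ?_, ?_⟩, fun B hB b => ?_⟩
  · simpa [frobeniusConst, hp.ne'] using WeylN.map_wgen_pow p σ k (hσ k)
  · rintro rfl k
    simpa [frobeniusConst] using WeylN.map_wgen_pow 2 σ k (hσ k)
  · obtain ⟨A, a, hσ⟩ := WeylN.exists_affineEquiv_map_wgen_pow p ⟨B, hB⟩ b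
    exact ⟨WeylN.affineEquiv A a, ⟨A, A.2, a, WeylN.affineEquiv_wgen A a⟩, hσ⟩

theorem statement18 (p n : ℕ) (hp : p.Prime) (K : Type*) [Field K] [CharP K p]
    (hperf : Function.Surjective fun a : K => a ^ p) :
    (∀ A : Matrix (Fin n ⊕ Fin n) (Fin n ⊕ Fin n) K, A ∈ Matrix.symplecticGroup (Fin n) K →
      ∀ a : Fin n ⊕ Fin n → K, ∀ σ : WeylN K n ≃ₐ[K] WeylN K n,
      (∀ k, σ (wgen K n k)
          = (∑ l, algebraMap K (WeylN K n) (A k l) * wgen K n l)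
            + algebraMap K (WeylN K n) (a k)) →
      (2 < p → ∀ k, σ (wgen K n k ^ p)
          = (∑ l, algebraMap K (WeylN K n) (A k l ^ p) * wgen K n l ^ p)
            + algebraMap K (WeylN K n) (a k ^ p)) ∧
      (p = 2 → ∀ k, σ (wgen K n k ^ p)
          = (∑ l, algebraMap K (WeylN K n) (A k l ^ 2) * wgen K n l ^ p)
            + algebraMap K (WeylN K n)
                (a k ^ 2 + ∑ j : Fin n, A k (Sum.inl j) * A k (Sum.inr j)))) ∧
    (∀ B : Matrix (Fin n ⊕ Fin n) (Fin n ⊕ Fin n) K, B ∈ Matrix.symplecticGroup (Fin n) K →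
      ∀ b : Fin n ⊕ Fin n → K,
      ∃ σ : WeylN K n ≃ₐ[K] WeylN K n,
        (∃ A ∈ Matrix.symplecticGroup (Fin n) K, ∃ a : Fin n ⊕ Fin n → K,
          ∀ k, σ (wgen K n k)
            = (∑ l, algebraMap K (WeylN K n) (A k l) * wgen K n l)
              + algebraMap K (WeylN K n) (a k)) ∧
        ∀ k, σ (wgen K n k ^ p)
          = (∑ l, algebraMap K (WeylN K n) (B k l) * wgen K n l ^ p)
            + algebraMap K (WeylN K n) (b k)) := by
  have : Fact p.Prime := ⟨hp⟩
  have : PerfectRing K p := .ofSurjective K p hperf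
  have hgeneral := statement18_general p n K
  exact ⟨fun A _ a σ => hgeneral.1 A a σ, hgeneral.2⟩
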